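/- Let U ⊆ Σ(X,P) be such that S(X,P) ∪ U generates the monoid Σ(X,P), and let i ∈ {1,…,r} be such that either i = 1 and d_1 ≠ 1, or i ≥ 2 and d_i − d_{i−1} ≥ 2. Then U ∩ 𝒞_i ≠ ∅. -/

import Mathlib

open Function Set

/-- The monoid (as a subset of `Function.End X`) of all transformations preserving
the partition induced by the equivalence relation `r`. -/
def TSet {X : Type*} (r : Setoid X) : Set (Function.End X) :=
  {f | ∀ x y : X, r x y → r (f x) (f y)}

/-- The group of units of `TSet r` (i.e. `S(X,P)`): the permutations `g` of `X` with
`x ∼ y ↔ g x ∼ g y`. -/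
def SXP {X : Type*} (r : Setoid X) : Set (Function.End X) :=
  {f | Function.Bijective f ∧ ∀ x y : X, r (f x) (f y) ↔ r x y}

/-- The submonoid (as a subset) of transformations preserving the partition whose
image meets every block of the partition. -/
def SigmaSet {X : Type*} (r : Setoid X) : Set (Function.End X) :=
  {f | f ∈ TSet r ∧ ∀ B ∈ Setoid.classes r, (Set.range f ∩ B).Nonempty}

/-- The number of blocks of the partition having size `s`. -/
noncomputable def blockCount {X : Type*} (r : Setoid X) (s : ℕ) : ℕ :=
  {B | B ∈ Setoid.classes r ∧ B.ncard = s}.ncard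

/-- Membership in `ℬᵢ`, where `a = dᵢ` and `b = d_{i+1}` are consecutive distinct
block sizes: `f ∈ Σ(X,P)`, and there are blocks `B, B'` of size `a` and `C, C'`
of size `b` such that `f` maps `B` injectively into `C`, maps `C'` onto `B'`, and
maps every other block bijectively onto a block of the same size. -/
def memB {X : Type*} (r : Setoid X) (a b : ℕ) (f : Function.End X) : Prop :=
  f ∈ SigmaSet r ∧
    ∃ B B' C C' : Set X,
      B ∈ Setoid.classes r ∧ B' ∈ Setoid.classes r ∧
      C ∈ Setoid.classes r ∧ C' ∈ Setoid.classes r ∧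
      B.ncard = a ∧ B'.ncard = a ∧ C.ncard = b ∧ C'.ncard = b ∧
      Set.InjOn f B ∧ f '' B ⊆ C ∧ f '' C' = B' ∧
      ∀ D ∈ Setoid.classes r, D ≠ B → D ≠ C' →
        ∃ E ∈ Setoid.classes r, f '' D = E ∧ Set.InjOn f D ∧ E.ncard = D.ncard

/-- Membership in `𝒞ᵢ`, where `s = dᵢ` is a block size: `f ∈ Σ(X,P)`, `f` maps
every block into a block of the same size, there is one block of size `s` whose
image under `f` has size `s - 1`, and `f` is injective on every other block. -/
def memC {X : Type*} (r : Setoid X) (s : ℕ) (f : Function.End X) : Prop :=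
  f ∈ SigmaSet r ∧
    (∀ D ∈ Setoid.classes r, ∃ E ∈ Setoid.classes r, E.ncard = D.ncard ∧ f '' D ⊆ E) ∧
    ∃ B ∈ Setoid.classes r, B.ncard = s ∧ (f '' B).ncard = s - 1 ∧
      ∀ D ∈ Setoid.classes r, D ≠ B → Set.InjOn f D

/-!
The complement of `𝒞ᵢ` in `Σ(X,P)` is a submonoid. Put `s = dᵢ`, so that no block has size `s - 1`,
and let `f * g ∈ 𝒞ᵢ` with `f, g ∈ Σ(X,P)`, where `g` is applied first. Then `g` is injective on all
blocks but at most one, which has size `s` and whose image has at least `s - 1` points, hence lies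
in a block of size at least `s`. So the permutation of the blocks induced by `g` never decreases
sizes and, by finiteness, preserves them. If `g` is injective on the exceptional block as well, it
maps blocks bijectively onto blocks and `f ∈ 𝒞ᵢ`; otherwise the collapse already happens in `g` and
`g ∈ 𝒞ᵢ`.

This submonoid contains the units but is proper, since collapsing two points of a block of size `s`
gives an element of `𝒞ᵢ`. Hence `U` cannot lie inside it.
-/

theorem mul_image {X : Type*} (f g : Function.End X) (s : Set X) :
    (f * g) '' s = f '' (g '' s) :=
  image_comp f g s

theorem comp_eq_of_injective_of_le_comp {ι α : Type*} [Finite ι] [PartialOrder α] {σ : ι → ι}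
    {w : ι → α} (hσ : Injective σ) (h : w ≤ w ∘ σ) : w ∘ σ = w := by
  funext q
  obtain ⟨n, hn, hq⟩ := hσ.mem_periodicPts q
  have hmono : Monotone fun k ↦ w (σ^[k] q) := monotone_nat_of_le_succ fun k ↦ by
    rw [iterate_succ_apply']
    exact h _
  refine le_antisymm ?_ (h q)
  calc w (σ q) ≤ w (σ^[n] q) := hmono (Nat.succ_le_of_lt hn)
    _ = w q := by rw [hq.eq]

theorem update_id_image {X : Type*} [DecidableEq X] {a b : X} {s : Set X} (hb : b ∈ s)
    (hab : a ≠ b) : update id a b '' s = s \ {a} := by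
  ext z
  constructor
  · rintro ⟨w, hw, rfl⟩
    obtain rfl | hwa := eq_or_ne w a
    · simpa using ⟨hb, hab.symm⟩
    · simpa [update_of_ne hwa] using ⟨hw, hwa⟩
  · rintro ⟨hz, hza⟩
    exact ⟨z, hz, update_of_ne hza b id⟩

theorem ne_sub_one_of_monotoneOn_of_gap {d : ℕ → ℕ} {m n i j : ℕ}
    (hd : MonotoneOn d (Icc m n)) (hi : i ∈ Icc m n) (hj : j ∈ Icc m n)
    (hgap : i = m ∨ d (i - 1) + 2 ≤ d i) (hpos : 0 < d i) :
    d j ≠ d i - 1 := by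
  rw [mem_Icc] at hi hj
  rcases lt_or_ge j i with hji | hij
  · have hle : d j ≤ d (i - 1) :=
      hd ⟨hj.1, hj.2⟩ ⟨by omega, by omega⟩ (Nat.le_sub_one_of_lt hji)
    omega
  · have hle : d i ≤ d j := hd hi hj hij
    omega

section Block

variable {X : Type*} {r : Setoid X} {x y : X}

/-- The block of `x`, that is, the equivalence class of `x` as a subset of `X`. It lets blocks be
handled through representatives, without mentioning `Setoid.classes`. -/
def block (r : Setoid X) (x : X) : Set X := {y | r y x}

theorem mem_block_self (r : Setoid X) (x : X) : x ∈ block r x := r.refl x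

theorem block_eq_block_iff : block r x = block r y ↔ r x y :=
  ⟨fun h ↦ h.subset (mem_block_self r x),
    fun h ↦ Set.ext fun _ ↦ ⟨fun hz ↦ r.trans hz h, fun hz ↦ r.trans hz (r.symm h)⟩⟩

theorem ncard_block_pos [Finite X] (r : Setoid X) (x : X) : 0 < (block r x).ncard :=
  (ncard_pos).2 ⟨x, mem_block_self r x⟩

theorem forall_mem_classes_iff {p : Set X → Prop} :
    (∀ D ∈ Setoid.classes r, p D) ↔ ∀ x, p (block r x) :=
  ⟨fun h x ↦ h _ ⟨x, rfl⟩, by rintro h _ ⟨x, rfl⟩; exact h x⟩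

theorem exists_mem_classes_iff {p : Set X → Prop} :
    (∃ D ∈ Setoid.classes r, p D) ↔ ∃ x, p (block r x) :=
  ⟨by rintro ⟨_, ⟨x, rfl⟩, h⟩; exact ⟨x, h⟩, fun ⟨x, h⟩ ↦ ⟨_, ⟨x, rfl⟩, h⟩⟩

theorem blockCount_ne_zero_iff [Finite X] {s : ℕ} :
    blockCount r s ≠ 0 ↔ ∃ x, (block r x).ncard = s := by
  rw [blockCount, ← Nat.pos_iff_ne_zero, ncard_pos]
  exact exists_mem_classes_iff

end Block

section Sigma

variable {X : Type*} {r : Setoid X} {f g : Function.End X} {b x : X}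

theorem image_block_subset (hf : f ∈ TSet r) (x : X) : f '' block r x ⊆ block r (f x) :=
  image_subset_iff.2 fun _ hy ↦ hf _ _ hy

theorem block_apply_eq (hf : f ∈ TSet r) (h : r x b) : block r (f x) = block r (f b) :=
  block_eq_block_iff.2 (hf _ _ h)

theorem mem_sigmaSet_iff : f ∈ SigmaSet r ↔ f ∈ TSet r ∧ ∀ x, ∃ y, r (f y) x := by
  refine and_congr_right fun _ ↦ forall_mem_classes_iff.trans (forall_congr' fun x ↦ ?_)
  exact ⟨fun ⟨_, ⟨y, rfl⟩, h⟩ ↦ ⟨y, h⟩, fun ⟨y, h⟩ ↦ ⟨_, ⟨y, rfl⟩, h⟩⟩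

theorem exists_block_apply_eq (hf : f ∈ SigmaSet r) (x : X) : ∃ y, block r (f y) = block r x :=
  ((mem_sigmaSet_iff.1 hf).2 x).imp fun _ ↦ block_eq_block_iff.2

theorem mul_mem_sigmaSet (hf : f ∈ SigmaSet r) (hg : g ∈ SigmaSet r) : f * g ∈ SigmaSet r := by
  rw [mem_sigmaSet_iff] at *
  refine ⟨fun x y h ↦ hf.1 _ _ (hg.1 _ _ h), fun x ↦ ?_⟩
  obtain ⟨y, hy⟩ := hf.2 x
  obtain ⟨z, hz⟩ := hg.2 y
  exact ⟨z, r.trans (hf.1 _ _ hz) hy⟩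

theorem SXP_subset_sigmaSet : SXP r ⊆ SigmaSet r := fun f ⟨hbij, hf⟩ ↦
  mem_sigmaSet_iff.2 ⟨fun x y ↦ (hf x y).2, fun x ↦
    (hbij.surjective x).imp fun y hy ↦ by rw [hy]⟩

theorem one_mem_SXP : (1 : Function.End X) ∈ SXP r := ⟨bijective_id, fun _ _ ↦ Iff.rfl⟩

theorem mem_sigmaSet_of_forall_rel (h : ∀ x, r (f x) x) : f ∈ SigmaSet r :=
  mem_sigmaSet_iff.2
    ⟨fun x y hxy ↦ r.trans (h x) (r.trans hxy (r.symm (h y))), fun x ↦ ⟨x, h x⟩⟩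

variable [Finite X]

theorem ncard_block_le_of_injOn (hf : f ∈ TSet r) (h : InjOn f (block r x)) :
    (block r x).ncard ≤ (block r (f x)).ncard :=
  h.ncard_image ▸ ncard_le_ncard (image_block_subset hf x)

theorem ncard_block_apply_of_forall_le (hf : f ∈ SigmaSet r)
    (h : ∀ x, (block r x).ncard ≤ (block r (f x)).ncard) (x : X) :
    (block r (f x)).ncard = (block r x).ncard := by
  let σ : Quotient r → Quotient r := Quotient.map f hf.1
  let size : Quotient r → ℕ := Quotient.lift (fun x ↦ (block r x).ncard)
    fun _ _ h ↦ congrArg ncard (block_eq_block_iff.2 h)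
  have hσ : Surjective σ := Quotient.ind fun x ↦
    ((mem_sigmaSet_iff.1 hf).2 x).elim fun y hy ↦ ⟨⟦y⟧, Quotient.sound hy⟩
  have hle : size ≤ size ∘ σ := Quotient.ind h
  exact congrFun (comp_eq_of_injective_of_le_comp (Finite.injective_iff_surjective.2 hσ) hle) ⟦x⟧

theorem ncard_block_apply_of_injOn_off (hf : f ∈ SigmaSet r)
    (hinj : ∀ x, ¬ r x b → InjOn f (block r x))
    (hb : (block r b).ncard ≤ (block r (f b)).ncard) (x : X) :
    (block r (f x)).ncard = (block r x).ncard := by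
  refine ncard_block_apply_of_forall_le hf (fun x ↦ ?_) x
  by_cases hx : r x b
  · rwa [block_eq_block_iff.2 hx, block_apply_eq hf.1 hx]
  · exact ncard_block_le_of_injOn hf.1 (hinj x hx)

theorem ncard_block_apply_of_injOn (hf : f ∈ SigmaSet r) (hinj : ∀ x, InjOn f (block r x)) (x : X) :
    (block r (f x)).ncard = (block r x).ncard :=
  ncard_block_apply_of_forall_le hf (fun x ↦ ncard_block_le_of_injOn hf.1 (hinj x)) x

theorem image_block_eq_of_injOn (hf : f ∈ SigmaSet r) (hinj : ∀ x, InjOn f (block r x)) (x : X) :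
    f '' block r x = block r (f x) :=
  eq_of_subset_of_ncard_le (image_block_subset hf.1 x)
    ((hinj x).ncard_image.symm ▸ (ncard_block_apply_of_injOn hf hinj x).le)

end Sigma

section MemC

variable {X : Type*} {r : Setoid X} {f g : Function.End X} {s : ℕ}

theorem memC_iff : memC r s f ↔ f ∈ SigmaSet r ∧
    (∀ x, (block r (f x)).ncard = (block r x).ncard) ∧
    ∃ b, (block r b).ncard = s ∧ (f '' block r b).ncard = s - 1 ∧
      ∀ x, ¬ r x b → InjOn f (block r x) := by
  simp only [memC, forall_mem_classes_iff, exists_mem_classes_iff, Ne, block_eq_block_iff]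
  refine and_congr_right fun hf ↦ and_congr_left fun _ ↦ forall_congr' fun x ↦
    ⟨fun ⟨e, he, hsub⟩ ↦ ?_, fun h ↦ ⟨f x, h, image_block_subset hf.1 x⟩⟩
  have hfx : r (f x) e := hsub (mem_image_of_mem f (mem_block_self r x))
  rwa [block_eq_block_iff.2 hfx]

theorem memC_update_id [DecidableEq X] {a b : X} (ha : a ∈ block r b) (hab : a ≠ b) :
    memC r (block r b).ncard (update id a b : X → X) := by
  have hrel : ∀ x, r (update id a b x) x := fun x ↦ by
    obtain rfl | hx := eq_or_ne x a
    · simpa using r.symm ha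
    · simp [update_of_ne hx]
  refine memC_iff.2 ⟨mem_sigmaSet_of_forall_rel hrel,
    fun x ↦ by rw [block_eq_block_iff.2 (hrel x)], b, rfl, ?_, fun x hx ↦ ?_⟩
  · rw [update_id_image (mem_block_self r b) hab, ncard_sdiff_singleton_of_mem ha]
  · have hax : a ∉ block r x := fun hax ↦ hx (r.trans (r.symm hax) ha)
    exact (injOn_id _).congr fun z hz ↦
      (update_of_ne (ne_of_mem_of_not_mem hz hax) b id).symm

variable [Finite X]

theorem not_memC_of_injective (hf : Injective f) : ¬ memC r s f := by
  rw [memC_iff]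
  rintro ⟨-, -, b, hb, himage, -⟩
  rw [ncard_image_of_injective _ hf] at himage
  have hpos := ncard_block_pos r b
  omega

theorem memC_left_of_memC_mul (hf : f ∈ SigmaSet r) (hg : g ∈ SigmaSet r)
    (hinj : ∀ x, InjOn g (block r x)) (h : memC r s (f * g)) : memC r s f := by
  obtain ⟨-, hsize, b, hb, himage, hfginj⟩ := memC_iff.1 h
  have hgsize := ncard_block_apply_of_injOn hg hinj
  have hgimage := image_block_eq_of_injOn hg hinj
  refine memC_iff.2 ⟨hf, fun z ↦ ?_, g b, (hgsize b).trans hb, ?_, fun z hz ↦ ?_⟩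
  · obtain ⟨w, hw⟩ := exists_block_apply_eq hg z
    rw [← block_apply_eq hf.1 (block_eq_block_iff.1 hw), ← hw, hgsize]
    exact hsize w
  · rwa [← hgimage, ← mul_image]
  · obtain ⟨w, hw⟩ := exists_block_apply_eq hg z
    have hwb : ¬ r w b := fun hwb ↦
      hz (block_eq_block_iff.1 (hw.symm.trans (block_apply_eq hg.1 hwb)))
    rw [← hw, ← hgimage]
    exact InjOn.image_of_comp (hfginj w hwb)

theorem memC_right_of_memC_mul (hg : g ∈ SigmaSet r) (hs : ∀ x, (block r x).ncard ≠ s - 1)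
    (hninj : ¬ ∀ x, InjOn g (block r x)) (h : memC r s (f * g)) : memC r s g := by
  obtain ⟨-, -, b, hb, himage, hfginj⟩ := memC_iff.1 h
  have hginj : ∀ x, ¬ r x b → InjOn g (block r x) := fun x hx ↦
    InjOn.of_comp (hfginj x hx)
  have hninj_b : ¬ InjOn g (block r b) := fun hinj_b ↦ hninj fun x ↦ by
    by_cases hx : r x b
    · rwa [block_eq_block_iff.2 hx]
    · exact hginj x hx
  have hge : s - 1 ≤ (g '' block r b).ncard := by
    rw [← himage, mul_image]
    exact ncard_image_le
  have hlt : (g '' block r b).ncard < (block r b).ncard :=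
    lt_of_le_of_ne ncard_image_le fun h ↦ hninj_b (injOn_of_ncard_image_eq h)
  have hgb : (block r b).ncard ≤ (block r (g b)).ncard := by
    have hle := ncard_le_ncard (image_block_subset hg.1 b)
    have hne := hs (g b)
    omega
  exact memC_iff.2 ⟨hg, ncard_block_apply_of_injOn_off hg hginj hgb, b, hb, by omega, hginj⟩

/-- For `s = dᵢ`, the complement of `𝒞ᵢ` in `Σ(X,P)`, bundled as a submonoid so that it can be
compared with `Submonoid.closure`. -/
def sigmaDiffC (r : Setoid X) (s : ℕ) (hs : ∀ x, (block r x).ncard ≠ s - 1) :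
    Submonoid (Function.End X) where
  carrier := {f | f ∈ SigmaSet r ∧ ¬ memC r s f}
  one_mem' := ⟨SXP_subset_sigmaSet one_mem_SXP, not_memC_of_injective injective_id⟩
  mul_mem' := fun {f g} ⟨hf, hfC⟩ ⟨hg, hgC⟩ ↦ ⟨mul_mem_sigmaSet hf hg, fun h ↦ by
    by_cases hinj : ∀ x, InjOn g (block r x)
    · exact hfC (memC_left_of_memC_mul hf hg hinj h)
    · exact hgC (memC_right_of_memC_mul hg hs hinj h)⟩

theorem exists_mem_memC_of_subset_closure {U : Set (Function.End X)} (hU : U ⊆ SigmaSet r)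
    (hgen : SigmaSet r ⊆ Submonoid.closure (SXP r ∪ U)) (hs : ∀ x, (block r x).ncard ≠ s - 1)
    {b : X} (hb : (block r b).ncard = s) (hs_gt : 1 < s) : ∃ f ∈ U, memC r s f := by
  classical
  by_contra! hUC
  have hle : Submonoid.closure (SXP r ∪ U) ≤ sigmaDiffC r s hs :=
    Submonoid.closure_le.2 <| union_subset
      (fun _ hf ↦ ⟨SXP_subset_sigmaSet hf, not_memC_of_injective hf.1.injective⟩)
      fun f hf ↦ ⟨hU hf, hUC f hf⟩
  obtain ⟨a, ha, hab⟩ := exists_ne_of_one_lt_ncard (hb ▸ hs_gt) b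
  have hcollapse : memC r s (update id a b : X → X) := hb ▸ memC_update_id ha hab
  exact (hle (hgen hcollapse.1)).2 hcollapse

end MemC

/-- (Here `d 1 < d 2 < … < d R` are the distinct block sizes
of the partition.)  If `U ⊆ Σ(X,P)` is such that `S(X,P) ∪ U` generates the
monoid `Σ(X,P)`, and `i ∈ {1, …, R}` is such that either `i = 1` and `d 1 ≠ 1`,
or `i ≥ 2` and `d i − d (i−1) ≥ 2`, then `U ∩ 𝒞ᵢ ≠ ∅`. -/
theorem generators_meet_C {X : Type*} [Fintype X] [Nonempty X] (r : Setoid X)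
    (R : ℕ) (d : ℕ → ℕ)
    (hdmono : ∀ i, 1 ≤ i → i + 1 ≤ R → d i < d (i + 1))
    (hdsizes : ∀ s, blockCount r s ≠ 0 ↔ ∃ i, 1 ≤ i ∧ i ≤ R ∧ d i = s)
    (U : Set (Function.End X)) (hU : U ⊆ SigmaSet r)
    (hgen : (Submonoid.closure (SXP r ∪ U) : Set (Function.End X)) = SigmaSet r)
    (i : ℕ) (hiR : 1 ≤ i ∧ i ≤ R)
    (hi : (i = 1 ∧ d 1 ≠ 1) ∨ (2 ≤ i ∧ d (i - 1) + 2 ≤ d i)) :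
    ∃ f ∈ U, memC r (d i) f := by
  have hd : StrictMonoOn d (Icc 1 R) :=
    strictMonoOn_of_lt_add_one ordConnected_Icc fun k _ hk hk' ↦ hdmono k hk.1 hk'.2
  obtain ⟨b, hb⟩ := blockCount_ne_zero_iff.1 ((hdsizes (d i)).2 ⟨i, hiR.1, hiR.2, rfl⟩)
  have hpos : 0 < d i := hb ▸ ncard_block_pos r b
  have hgap : i = 1 ∨ d (i - 1) + 2 ≤ d i := hi.imp And.left And.right
  have hs : ∀ x, (block r x).ncard ≠ d i - 1 := fun x hx ↦ by
    obtain ⟨j, hj1, hjR, hj⟩ := (hdsizes _).1 (blockCount_ne_zero_iff.2 ⟨x, hx⟩)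
    exact ne_sub_one_of_monotoneOn_of_gap hd.monotoneOn hiR ⟨hj1, hjR⟩ hgap hpos hj
  have hs_gt : 1 < d i := by
    rcases hi with ⟨rfl, h⟩ | ⟨-, h⟩ <;> omega
  exact exists_mem_memC_of_subset_closure hU hgen.ge hs hb hs_gt
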